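/- Let (C, d) be a filtered complex over the universal Novikov field Λ with filtration 𝒜, let D : (C, d) → (C, d) be a filtered chain map, and for σ > 0 let C̄_σ = Cone(T^σ · D) be the shifted mapping cone, with underlying module C ⊕ C, filtration max{𝒜, 𝒜}, and differential d_Cone(c, c') = (-d(c), T^σ D(c) + d(c')). Then for all σ sufficiently large (σ ≫ β(C,d), the maximal finite bar-length of (C,d)), the bar-length spectrum of C̄_σ splits into a low part, which equals the doubled bar-length spectrum β₁(C,d) ≤ β₁(C,d) ≤ ... ≤ β_K(C,d) ≤ β_K(C,d), and a high part, which equals σ + β_k(Cone(H(C,d), [D])) where [D] is the induced map on homology with the induced filtration H(𝒜). -/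

import Mathlib

/-- A family `e` is *orthogonal* for a filtration function `𝒜` and valuation `ν`. -/
def IsOrthFamily {Λ V ι : Type*} [Field Λ] [AddCommGroup V] [Module Λ V] [Fintype ι]
    (ν : Λ → EReal) (𝒜 : V → EReal) (e : ι → V) : Prop :=
  ∀ lam : ι → Λ,
    𝒜 (∑ i, lam i • e i) = Finset.univ.sup fun i => 𝒜 (e i) - ν (lam i)

/-- The multiset `S` is the finite bar-length spectrum of the filtered complex
`(V, d, 𝒜)`, via an orthogonal Usher–Zhang normal-form basis. -/
def IsBarSpectrum {Λ V : Type*} [Field Λ] [AddCommGroup V] [Module Λ V]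
    (ν : Λ → EReal) (𝒜 : V → EReal) (d : V →ₗ[Λ] V) (S : Multiset ℝ) : Prop :=
  ∃ (B K : ℕ) (e : Fin B ⊕ Fin K ⊕ Fin K → V) (β : Fin K → ℝ),
    LinearIndependent Λ e ∧
    Submodule.span Λ (Set.range e) = ⊤ ∧
    IsOrthFamily ν 𝒜 e ∧
    (∀ i : Fin B, d (e (Sum.inl i)) = 0) ∧
    (∀ j : Fin K, d (e (Sum.inr (Sum.inl j))) = e (Sum.inr (Sum.inr j))) ∧
    (∀ j : Fin K,
      𝒜 (e (Sum.inr (Sum.inl j))) - 𝒜 (e (Sum.inr (Sum.inr j))) = (β j : EReal)) ∧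
    S = Finset.univ.val.map β

/-- The homology of a differential `d : C → C`. -/
abbrev Hgy {Λ C : Type*} [Field Λ] [AddCommGroup C] [Module Λ C] (d : C →ₗ[Λ] C) :=
  LinearMap.ker d ⧸
    (Submodule.comap (LinearMap.ker d).subtype (LinearMap.range d))

/-- The induced filtration on homology: infimum of `𝒜` over representatives. -/
noncomputable def inducedFiltration {Λ C : Type*} [Field Λ] [AddCommGroup C] [Module Λ C]
    (d : C →ₗ[Λ] C) (𝒜 : C → EReal) : Hgy d → EReal :=
  fun h => sInf {r : EReal | ∃ x : LinearMap.ker d,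
    Submodule.Quotient.mk x = h ∧ 𝒜 (x : C) = r}

/-- The map induced on homology by a chain map `D`. -/
def inducedMap {Λ C : Type*} [Field Λ] [AddCommGroup C] [Module Λ C]
    (d D : C →ₗ[Λ] C) (hchain : d ∘ₗ D = D ∘ₗ d) : Hgy d →ₗ[Λ] Hgy d :=
  Submodule.mapQ _ _
    (D.restrict (p := LinearMap.ker d) (q := LinearMap.ker d) (fun x hx => by
      have h := LinearMap.congr_fun hchain x
      simp only [LinearMap.comp_apply] at h
      simp only [LinearMap.mem_ker] at hx ⊢
      rw [h, hx, map_zero]))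
    (by
      intro x hx
      simp only [Submodule.mem_comap, LinearMap.mem_range, Submodule.coe_subtype] at hx ⊢
      obtain ⟨y, hy⟩ := hx
      refine ⟨D y, ?_⟩
      have h := LinearMap.congr_fun hchain y
      simp only [LinearMap.comp_apply] at h
      rw [h, hy]
      rfl)

/-- The `σ`-shifted cone differential on `C × C`:
`(c, c') ↦ (-d c, t • D c + d c')`, where `t = T^σ`. -/
def coneDiff {Λ C : Type*} [Field Λ] [AddCommGroup C] [Module Λ C]
    (d D : C →ₗ[Λ] C) (t : Λ) : (C × C) →ₗ[Λ] (C × C) :=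
  LinearMap.prod ((-d) ∘ₗ LinearMap.fst Λ C C)
    ((t • D) ∘ₗ LinearMap.fst Λ C C + d ∘ₗ LinearMap.snd Λ C C)

/-- The cone filtration `max{𝒜, 𝒜}` on a product. -/
noncomputable def coneFilt {C C' : Type*} (𝒜 : C → EReal) (𝒜' : C' → EReal) : C × C' → EReal :=
  fun p => max (𝒜 p.1) (𝒜' p.2)

/-- Normal-form data with arbitrary finite index types. -/
structure GenBar {Λ V ι κ : Type*} [Field Λ] [AddCommGroup V] [Module Λ V] [Fintype ι] [Fintype κ]
    (ν : Λ → EReal) (𝒜 : V → EReal) (d : V →ₗ[Λ] V) (e : ι ⊕ κ ⊕ κ → V) (β : κ → ℝ) : Prop where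
  li : LinearIndependent Λ e
  span : Submodule.span Λ (Set.range e) = ⊤
  orth : IsOrthFamily ν 𝒜 e
  dker : ∀ i : ι, d (e (Sum.inl i)) = 0
  dz : ∀ j : κ, d (e (Sum.inr (Sum.inl j))) = e (Sum.inr (Sum.inr j))
  bar : ∀ j : κ, 𝒜 (e (Sum.inr (Sum.inl j))) - 𝒜 (e (Sum.inr (Sum.inr j))) = (β j : EReal)

lemma ereal_sub_eq_real {x y : EReal} {b : ℝ} (h : x - y = (b : EReal)) :
    ∃ r : ℝ, y = (r : EReal) ∧ x = ((r + b : ℝ) : EReal) := by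
  induction x with
  | bot => simp at h
  | top =>
    induction y with
    | bot => simp [sub_eq_add_neg] at h
    | top => simp [sub_eq_add_neg] at h
    | coe y => simp [sub_eq_add_neg] at h
  | coe x =>
    induction y with
    | bot => simp [sub_eq_add_neg] at h
    | top => simp [sub_eq_add_neg] at h
    | coe y =>
      refine ⟨y, rfl, ?_⟩
      have h' : x - y = b := by exact_mod_cast h
      norm_cast
      linarith

lemma GenBar.card_le {Λ V ι κ ι' κ' : Type*} [Field Λ] [AddCommGroup V] [Module Λ V]
    [Fintype ι] [Fintype κ] [Fintype ι'] [Fintype κ']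
    {ν : Λ → EReal} (hν_ne_bot : ∀ x : Λ, ν x ≠ ⊥) (hν_zero : ∀ x : Λ, ν x = ⊤ ↔ x = 0)
    {𝒜 : V → EReal} {d : V →ₗ[Λ] V} (hd2 : ∀ x, d (d x) = 0)
    {e : ι ⊕ κ ⊕ κ → V} {β : κ → ℝ} {e' : ι' ⊕ κ' ⊕ κ' → V} {β' : κ' → ℝ}
    (H : GenBar ν 𝒜 d e β) (H' : GenBar ν 𝒜 d e' β')
    (P : ℝ → Prop) [DecidablePred P] (hP : ∀ b b', P b → ¬ P b' → b' < b) :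
    Fintype.card {j // P (β j)} ≤ Fintype.card {k // P (β' k)} := by
  classical
  by_contra hlt
  push Not at hlt
  let b := Module.Basis.mk H.li (by rw [H.span])
  let b' := Module.Basis.mk H'.li (by rw [H'.span])
  have hb : ∀ i, b i = e i := fun i => by simp [b]
  have hb' : ∀ i, b' i = e' i := fun i => by simp [b']
  have dη : ∀ j, d (e (Sum.inr (Sum.inr j))) = 0 := fun j => by rw [← H.dz, hd2]
  have dη' : ∀ j, d (e' (Sum.inr (Sum.inr j))) = 0 := fun j => by rw [← H'.dz, hd2]
  have dx : ∀ x, d x = ∑ j, b.repr x (Sum.inr (Sum.inl j)) • e (Sum.inr (Sum.inr j)) := by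
    intro x
    conv_lhs => rw [← b.sum_repr x]
    simp [Fintype.sum_sum_type, hb, H.dker, H.dz, dη]
  have dx' : ∀ x, d x = ∑ j, b'.repr x (Sum.inr (Sum.inl j)) • e' (Sum.inr (Sum.inr j)) := by
    intro x
    conv_lhs => rw [← b'.sum_repr x]
    simp [Fintype.sum_sum_type, hb', H'.dker, H'.dz, dη']
  have rη : ∀ (a : κ → Λ) k, b.repr (∑ j, a j • e (Sum.inr (Sum.inr j))) (Sum.inr (Sum.inr k))
      = a k := by
    intro a k
    simp [← hb, Finsupp.single_apply]
  have rη' : ∀ (a : κ' → Λ) k, b'.repr (∑ j, a j • e' (Sum.inr (Sum.inr j)))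
      (Sum.inr (Sum.inr k)) = a k := by
    intro a k
    simp [← hb', Finsupp.single_apply]
  let f : (κ → Λ) →ₗ[Λ] ({j // ¬ P (β j)} ⊕ {k // P (β' k)} → Λ) :=
    LinearMap.pi (Sum.elim (fun j => LinearMap.proj j.1)
      (fun k => b'.coord (Sum.inr (Sum.inr k.1)) ∘ₗ
        Fintype.linearCombination Λ (fun j => e (Sum.inr (Sum.inr j)))))
  have hker : LinearMap.ker f ≠ ⊥ := by
    apply LinearMap.ker_ne_bot_of_finrank_lt
    simp only [Module.finrank_fintype_fun_eq_card, Fintype.card_sum]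
    have := Fintype.card_subtype_compl (fun j => P (β j))
    have h2 := Fintype.card_subtype_le (fun j => P (β j))
    omega
  obtain ⟨a, ha, ha0⟩ := (Submodule.ne_bot_iff _).1 hker
  have ha' := fun i => congrFun (LinearMap.mem_ker.1 ha) i
  have hlow : ∀ j, ¬ P (β j) → a j = 0 := fun j hj => by
    simpa [f] using ha' (Sum.inl ⟨j, hj⟩)
  set w := ∑ j, a j • e (Sum.inr (Sum.inr j)) with hw
  have hhigh : ∀ k, P (β' k) → b'.repr w (Sum.inr (Sum.inr k)) = 0 := fun k hk => by
    simpa [f, Fintype.linearCombination_apply, hw] using ha' (Sum.inr ⟨k, hk⟩)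
  set x := ∑ j, a j • e (Sum.inr (Sum.inl j)) with hx
  have hdx : d x = w := by simp [hx, hw, H.dz]
  set c : κ' → Λ := fun k => b'.repr x (Sum.inr (Sum.inl k)) with hc
  have hwc : w = ∑ k, c k • e' (Sum.inr (Sum.inr k)) := by rw [← hdx, dx']
  have hc0 : ∀ k, P (β' k) → c k = 0 := fun k hk => by
    rw [← hhigh k hk, hwc, rη']
  set x' := ∑ k, c k • e' (Sum.inr (Sum.inl k)) with hx'
  have hdx' : d x' = w := by simp [hx', hwc, H'.dz]
  have hcoef : ∀ j, b.repr x' (Sum.inr (Sum.inl j)) = a j := fun j => by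
    rw [← rη (fun j => b.repr x' (Sum.inr (Sum.inl j))) j, ← dx, hdx', hw, rη]
  have Aw : 𝒜 w = Finset.univ.sup fun j => 𝒜 (e (Sum.inr (Sum.inr j))) - ν (a j) := by
    have := H.orth (Sum.elim 0 (Sum.elim 0 a))
    simp only [Fintype.sum_sum_type, Sum.elim_inl, Sum.elim_inr, Pi.zero_apply, zero_smul,
      Finset.sum_const_zero, zero_add] at this
    rw [hw, this]
    apply eq_of_forall_ge_iff
    intro M
    simp [Finset.sup_le_iff, (hν_zero 0).2 rfl, sub_eq_add_neg]
  have Aw' : ∀ k, 𝒜 (e' (Sum.inr (Sum.inr k))) - ν (c k) ≤ 𝒜 w := by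
    intro k
    have := H'.orth (Sum.elim 0 (Sum.elim 0 c))
    simp only [Fintype.sum_sum_type, Sum.elim_inl, Sum.elim_inr, Pi.zero_apply, zero_smul,
      Finset.sum_const_zero, zero_add] at this
    rw [hwc, this]
    exact Finset.le_sup (f := fun i => 𝒜 (e' i) - ν ((Sum.elim 0 (Sum.elim 0 c) : _ → Λ) i))
      (Finset.mem_univ (Sum.inr (Sum.inr k)))
  have Ax' : ∀ j, 𝒜 (e (Sum.inr (Sum.inl j))) - ν (a j) ≤ 𝒜 x' := by
    intro j
    have := H.orth (fun i => b.repr x' i)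
    have h2 := b.sum_repr x'
    simp only [hb] at h2
    rw [h2] at this
    rw [this, ← hcoef]
    exact Finset.le_sup (f := fun i => 𝒜 (e i) - ν (b.repr x' i))
      (Finset.mem_univ (Sum.inr (Sum.inl j)))
  have Ax : 𝒜 x' = Finset.univ.sup fun k => 𝒜 (e' (Sum.inr (Sum.inl k))) - ν (c k) := by
    have := H'.orth (Sum.elim 0 (Sum.elim c 0))
    simp only [Fintype.sum_sum_type, Sum.elim_inl, Sum.elim_inr, Pi.zero_apply, zero_smul,
      Finset.sum_const_zero, zero_add, add_zero] at this
    rw [hx', this]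
    apply eq_of_forall_ge_iff
    intro M
    simp [Finset.sup_le_iff, (hν_zero 0).2 rfl, sub_eq_add_neg]
  have hreal : ∀ y : Λ, y ≠ 0 → ∃ r : ℝ, ν y = r := fun y hy =>
    ⟨(ν y).toReal, (EReal.coe_toReal (fun h => hy ((hν_zero y).1 h)) (hν_ne_bot y)).symm⟩
  obtain ⟨j₁, hj₁⟩ := Function.ne_iff.1 ha0
  obtain ⟨j, -, hj⟩ := Finset.exists_mem_eq_sup Finset.univ ⟨j₁, Finset.mem_univ j₁⟩
    (fun j => 𝒜 (e (Sum.inr (Sum.inr j))) - ν (a j))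
  rw [← Aw] at hj
  have hajne : a j ≠ 0 := by
    intro h0
    have h1 : 𝒜 (e (Sum.inr (Sum.inr j₁))) - ν (a j₁) ≤ 𝒜 w := by
      rw [Aw]
      exact Finset.le_sup (f := fun j => 𝒜 (e (Sum.inr (Sum.inr j))) - ν (a j))
        (Finset.mem_univ j₁)
    obtain ⟨r, hr, -⟩ := ereal_sub_eq_real (H.bar j₁)
    obtain ⟨s, hs⟩ := hreal _ hj₁
    rw [hj, h0, (hν_zero 0).2 rfl, hr, hs] at h1
    simp only [sub_eq_add_neg, EReal.neg_top, EReal.add_bot, le_bot_iff] at h1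
    exact EReal.coe_ne_bot _ (by exact_mod_cast h1)
  have hPj : P (β j) := by
    by_contra h
    exact hajne (hlow j h)
  obtain ⟨r, hr, hr'⟩ := ereal_sub_eq_real (H.bar j)
  obtain ⟨s, hs⟩ := hreal _ hajne
  have hlt' : 𝒜 x' < ((r + β j - s : ℝ) : EReal) := by
    rw [Ax, Finset.sup_lt_iff (EReal.bot_lt_coe _)]
    intro k _
    by_cases hk : c k = 0
    · rw [hk, (hν_zero 0).2 rfl]
      simp only [sub_eq_add_neg, EReal.neg_top, EReal.add_bot]
      exact EReal.bot_lt_coe _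
    · have hnP : ¬ P (β' k) := fun h => hk (hc0 k h)
      have hbb := hP _ _ hPj hnP
      obtain ⟨r', hr1, hr2⟩ := ereal_sub_eq_real (H'.bar k)
      obtain ⟨s', hs'⟩ := hreal _ hk
      have h3 := Aw' k
      rw [hj, hr, hs, hr1, hs'] at h3
      rw [hr2, hs']
      norm_cast at h3 ⊢
      linarith
  have := Ax' j
  rw [hr', hs] at this
  have h4 := lt_of_le_of_lt this hlt'
  norm_cast at h4
  exact lt_irrefl _ h4

lemma GenBar.unique {Λ V ι κ ι' κ' : Type*} [Field Λ] [AddCommGroup V] [Module Λ V]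
    [Fintype ι] [Fintype κ] [Fintype ι'] [Fintype κ']
    {ν : Λ → EReal} (hν_ne_bot : ∀ x : Λ, ν x ≠ ⊥) (hν_zero : ∀ x : Λ, ν x = ⊤ ↔ x = 0)
    {𝒜 : V → EReal} {d : V →ₗ[Λ] V} (hd2 : ∀ x, d (d x) = 0)
    {e : ι ⊕ κ ⊕ κ → V} {β : κ → ℝ} {e' : ι' ⊕ κ' ⊕ κ' → V} {β' : κ' → ℝ}
    (H : GenBar ν 𝒜 d e β) (H' : GenBar ν 𝒜 d e' β') :
    (Finset.univ : Finset κ).val.map β = (Finset.univ : Finset κ').val.map β' := by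
  classical
  have key : ∀ (P : ℝ → Prop), (∀ b b', P b → ¬ P b' → b' < b) →
      Multiset.countP P ((Finset.univ : Finset κ).val.map β)
        = Multiset.countP P ((Finset.univ : Finset κ').val.map β') := by
    intro P hP
    have := le_antisymm (H.card_le hν_ne_bot hν_zero hd2 H' P hP)
      (H'.card_le hν_ne_bot hν_zero hd2 H P hP)
    rw [Fintype.card_subtype, Fintype.card_subtype] at this
    rw [Multiset.countP_map, Multiset.countP_map]
    exact this
  have split : ∀ (S : Multiset ℝ) (x : ℝ),
      S.countP (fun y => x ≤ y) = S.countP (fun y => x < y) + S.count x := by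
    intro S x
    induction S using Multiset.induction_on with
    | empty => simp
    | cons a S ih =>
      rw [Multiset.countP_cons, Multiset.countP_cons, Multiset.count_cons, ih]
      rcases lt_trichotomy x a with h | h | h
      · simp [h, h.le, h.ne]; omega
      · simp [h]; omega
      · simp [h.not_ge, h.not_gt, h.ne']
  ext x
  have h1 := key (fun y => x ≤ y) (fun b b' h h' => by push Not at h'; linarith)
  have h2 := key (fun y => x < y) (fun b b' h h' => by push Not at h'; linarith)
  have h3 := split ((Finset.univ : Finset κ).val.map β) x
  have h4 := split ((Finset.univ : Finset κ').val.map β') x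
  omega

lemma orth_le_iff {Λ V ι : Type*} [Field Λ] [AddCommGroup V] [Module Λ V] [Fintype ι]
    {ν : Λ → EReal} {𝒜 : V → EReal} (hsmul : ∀ (l : Λ) (x : V), 𝒜 (l • x) = 𝒜 x - ν l)
    {e : ι → V} :
    IsOrthFamily ν 𝒜 e ↔
      ∀ (lam : ι → Λ) (M : EReal), 𝒜 (∑ i, lam i • e i) ≤ M ↔ ∀ i, 𝒜 (lam i • e i) ≤ M := by
  constructor
  · intro h lam M
    rw [h lam, Finset.sup_le_iff]
    simp [hsmul]
  · intro h lam
    apply eq_of_forall_ge_iff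
    intro M
    rw [h lam M, Finset.sup_le_iff]
    simp [hsmul]

lemma val_one {Λ : Type*} [Field Λ] {ν : Λ → EReal}
    (hν_ne_bot : ∀ x : Λ, ν x ≠ ⊥)
    (hν_zero : ∀ x : Λ, ν x = ⊤ ↔ x = 0)
    (hν_mul : ∀ x y : Λ, ν (x * y) = ν x + ν y) : ν (-1) = 0 := by
  have hreal : ∀ y : Λ, y ≠ 0 → ∃ r : ℝ, ν y = r := fun y hy =>
    ⟨(ν y).toReal, (EReal.coe_toReal (fun h => hy ((hν_zero y).1 h)) (hν_ne_bot y)).symm⟩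
  obtain ⟨r, hr⟩ := hreal 1 one_ne_zero
  obtain ⟨s, hs⟩ := hreal (-1) (neg_ne_zero.2 one_ne_zero)
  have h1 := hν_mul 1 1
  have h2 := hν_mul (-1) (-1)
  rw [mul_one, hr] at h1
  rw [neg_mul_neg, mul_one, hr, hs] at h2
  norm_cast at h1 h2
  rw [hs]
  norm_cast
  linarith

lemma ereal_max_sub (a b c : EReal) : max (a - c) (b - c) = max a b - c := by
  rcases le_total a b with h | h
  · rw [max_eq_right h, max_eq_right (EReal.sub_le_sub h le_rfl)]
  · rw [max_eq_left h, max_eq_left (EReal.sub_le_sub h le_rfl)]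

lemma cone_genbar
    {Λ C : Type*} [Field Λ] [AddCommGroup C] [Module Λ C]
    (ν : Λ → EReal)
    (hν_ne_bot : ∀ x : Λ, ν x ≠ ⊥)
    (hν_zero : ∀ x : Λ, ν x = ⊤ ↔ x = 0)
    (hν_mul : ∀ x y : Λ, ν (x * y) = ν x + ν y)
    (𝒜 : C → EReal)
    (h𝒜_zero : ∀ x : C, 𝒜 x = ⊥ ↔ x = 0)
    (h𝒜_smul : ∀ (l : Λ) (x : C), 𝒜 (l • x) = 𝒜 x - ν l)
    (h𝒜_max : ∀ x y : C, 𝒜 (x + y) ≤ max (𝒜 x) (𝒜 y))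
    (d D : C →ₗ[Λ] C)
    (hd2 : ∀ x, d (d x) = 0)
    (hD_filt : ∀ x : C, 𝒜 (D x) ≤ 𝒜 x)
    (hchain : d ∘ₗ D = D ∘ₗ d)
    (t : Λ) (σ R : ℝ) (ht : ν t = (σ : EReal)) (hσ : R ≤ σ)
    {ι κ ι' κ' : Type} [Fintype ι] [Fintype κ] [Fintype ι'] [Fintype κ']
    {e : ι ⊕ κ ⊕ κ → C} {β : κ → ℝ} (G : GenBar ν 𝒜 d e β) (hR : ∀ j, β j ≤ R)
    {e' : ι' ⊕ κ' ⊕ κ' → Hgy d × Hgy d} {β' : κ' → ℝ}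
    (G' : GenBar ν (coneFilt (inducedFiltration d 𝒜) (inducedFiltration d 𝒜))
          (LinearMap.prod 0
            ((inducedMap d D hchain) ∘ₗ LinearMap.fst Λ (Hgy d) (Hgy d))) e' β') :
    ∃ F : ι' ⊕ (κ' ⊕ κ ⊕ κ) ⊕ (κ' ⊕ κ ⊕ κ) → C × C,
      GenBar ν (coneFilt 𝒜 𝒜) (coneDiff d D t) F
        (Sum.elim (fun j => σ + β' j) (Sum.elim β β)) := by
  classical
  have hneg : ∀ x, 𝒜 (-x) = 𝒜 x := fun x => by
    have := h𝒜_smul (-1) x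
    rw [val_one hν_ne_bot hν_zero hν_mul] at this
    simpa using this
  have ht0 : t ≠ 0 := by
    intro h
    rw [h, (hν_zero 0).2 rfl] at ht
    exact EReal.coe_ne_top _ ht.symm
  have A0 : 𝒜 0 = ⊥ := (h𝒜_zero 0).2 rfl
  have hdD : ∀ x, d (D x) = D (d x) := fun x => LinearMap.congr_fun hchain x
  let b := Module.Basis.mk G.li (by rw [G.span])
  have hb : ∀ i, b i = e i := fun i => by simp [b]
  have dη : ∀ j, d (e (Sum.inr (Sum.inr j))) = 0 := fun j => by rw [← G.dz, hd2]
  have O := (orth_le_iff h𝒜_smul).1 G.orth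
  have Osum : ∀ x i, 𝒜 (b.repr x i • e i) ≤ 𝒜 x := by
    intro x
    have h := b.sum_repr x
    simp only [hb] at h
    rw [← O, h]
  let p : C →ₗ[Λ] C := b.constr Λ (Sum.elim (fun i => e (Sum.inl i)) 0)
  let u : C →ₗ[Λ] C := b.constr Λ (Sum.elim 0 (Sum.elim 0 (fun j => e (Sum.inr (Sum.inl j)))))
  have pe : ∀ i, p (e i) = Sum.elim (fun i => e (Sum.inl i)) 0 i := fun i => by
    rw [← hb]; exact b.constr_basis _ _ _
  have ue : ∀ i, u (e i) = Sum.elim (fun _ : ι => (0 : C))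
      (Sum.elim (fun _ : κ => (0 : C)) (fun j => e (Sum.inr (Sum.inl j)))) i :=
    fun i => by rw [← hb]; exact b.constr_basis _ _ _
  have px : ∀ x, p x = ∑ i, b.repr x (Sum.inl i) • e (Sum.inl i) := by
    intro x
    conv_lhs => rw [← b.sum_repr x]
    simp [hb, pe, Fintype.sum_sum_type]
  have ux : ∀ x, u x = ∑ j, b.repr x (Sum.inr (Sum.inr j)) • e (Sum.inr (Sum.inl j)) := by
    intro x
    conv_lhs => rw [← b.sum_repr x]
    simp [hb, ue, Fintype.sum_sum_type]
  have dec : ∀ x, p x + d (u x) + u (d x) = x := by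
    have : p + d ∘ₗ u + u ∘ₗ d = LinearMap.id := by
      apply b.ext
      rintro (i | j | j) <;> simp [hb, pe, ue, G.dker, G.dz, dη]
    intro x
    exact LinearMap.congr_fun this x
  have dp : ∀ x, d (p x) = 0 := fun x => by simp [px, G.dker]
  have pd : ∀ x, p (d x) = 0 := by
    have : p ∘ₗ d = 0 := by
      apply b.ext
      rintro (i | j | j) <;> simp [hb, pe, G.dker, G.dz, dη]
    exact fun x => LinearMap.congr_fun this x
  have pp : ∀ x, p (p x) = p x := fun x => by simp [px x, pe]
  have Ap : ∀ x, 𝒜 (p x) ≤ 𝒜 x := by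
    intro x
    have := (O (Sum.elim (fun i => b.repr x (Sum.inl i)) 0) (𝒜 x)).2 (by
      rintro (i | i)
      · exact Osum x _
      · simp [A0])
    simpa [px, Fintype.sum_sum_type] using this
  have Au : ∀ x, 𝒜 (u x) ≤ 𝒜 x + (R : EReal) := by
    intro x
    have := (O (Sum.elim 0 (Sum.elim (fun j => b.repr x (Sum.inr (Sum.inr j))) 0))
      (𝒜 x + (R : EReal))).2 (by
      rintro (i | j | j)
      · simp [A0]
      · refine le_trans ?_ (add_le_add_left (Osum x (Sum.inr (Sum.inr j))) _)
        simp only [Sum.elim_inr, Sum.elim_inl, h𝒜_smul]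
        obtain ⟨r, hr, hr'⟩ := ereal_sub_eq_real (G.bar j)
        rw [hr, hr']
        have hle : ((r + β j : ℝ) : EReal) ≤ (r : EReal) + (R : EReal) := by
          norm_cast
          linarith [hR j]
        calc ((r + β j : ℝ) : EReal) - ν (b.repr x (Sum.inr (Sum.inr j)))
            ≤ (r : EReal) + (R : EReal) - ν (b.repr x (Sum.inr (Sum.inr j))) :=
              EReal.sub_le_sub hle le_rfl
          _ = _ := by rw [sub_eq_add_neg, sub_eq_add_neg, add_right_comm]
      · simp [A0])
    simpa [ux, Fintype.sum_sum_type] using this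
  let s : Hgy d →ₗ[Λ] C := Submodule.liftQ _ (p ∘ₗ (LinearMap.ker d).subtype) (by
    intro x hx
    obtain ⟨y, hy⟩ := hx
    have hy' : d y = (x : C) := hy
    simp [← hy', pd])
  have smk : ∀ x : LinearMap.ker d, s (Submodule.Quotient.mk x) = p x := fun x => rfl
  have ps : ∀ h, p (s h) = s h := by
    intro h
    obtain ⟨x, rfl⟩ := Submodule.Quotient.mk_surjective _ h
    rw [smk, pp]
  have ds : ∀ h, d (s h) = 0 := fun h => by rw [← ps, dp]
  have s_inj : ∀ h, s h = 0 → h = 0 := by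
    intro h h0
    obtain ⟨x, rfl⟩ := Submodule.Quotient.mk_surjective _ h
    rw [smk] at h0
    rw [Submodule.Quotient.mk_eq_zero]
    refine ⟨u x, ?_⟩
    have := dec x
    rw [h0, LinearMap.mem_ker.1 x.2] at this
    simpa using this
  have AH : ∀ h, inducedFiltration d 𝒜 h = 𝒜 (s h) := by
    intro h
    apply le_antisymm
    · apply sInf_le
      refine ⟨⟨s h, ds h⟩, ?_, rfl⟩
      have : s (Submodule.Quotient.mk ⟨s h, ds h⟩ - h) = 0 := by
        rw [map_sub, smk]
        simp [ps]
      exact sub_eq_zero.1 (s_inj _ this)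
    · apply le_sInf
      rintro r ⟨x, rfl, rfl⟩
      rw [smk]
      exact Ap x
  have sD : ∀ h, s (inducedMap d D hchain h) = p (D (s h)) := by
    intro h
    obtain ⟨x, rfl⟩ := Submodule.Quotient.mk_surjective _ h
    have h1 : s (inducedMap d D hchain (Submodule.Quotient.mk x)) = p (D x) := rfl
    rw [h1, smk]
    conv_lhs => rw [← dec x, LinearMap.mem_ker.1 x.2]
    simp [← hdD, pd]
  let P : C →ₗ[Λ] C := -(t • (u ∘ₗ D ∘ₗ p + D ∘ₗ u))
  have hP : ∀ x, P x = -(t • (u (D (p x)) + D (u x))) := fun x => rfl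
  have AP : ∀ x, 𝒜 (P x) ≤ 𝒜 x := by
    intro x
    rw [hP, hneg, h𝒜_smul, ht]
    have h1 : 𝒜 (u (D (p x)) + D (u x)) ≤ 𝒜 x + (R : EReal) := by
      refine (h𝒜_max _ _).trans (max_le ?_ ?_)
      · exact (Au _).trans (add_le_add_left ((hD_filt _).trans (Ap _)) _)
      · exact (hD_filt _).trans (Au _)
    rw [EReal.sub_le_iff_le_add (Or.inl (EReal.coe_ne_bot _)) (Or.inl (EReal.coe_ne_top _))]
    exact h1.trans (add_le_add_right (by exact_mod_cast hσ) _)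
  let φ : (C × C) →ₗ[Λ] (C × C) :=
    LinearMap.prod (LinearMap.fst Λ C C) (LinearMap.snd Λ C C + P ∘ₗ LinearMap.fst Λ C C)
  have hφ : ∀ x, φ x = (x.1, x.2 + P x.1) := fun x => rfl
  have Aφ : ∀ x, coneFilt 𝒜 𝒜 (φ x) = coneFilt 𝒜 𝒜 x := by
    rintro ⟨c, c'⟩
    simp only [hφ, coneFilt]
    apply le_antisymm
    · refine max_le (le_max_left _ _) ((h𝒜_max _ _).trans (max_le (le_max_right _ _) ?_))
      exact (AP c).trans (le_max_left _ _)
    · refine max_le (le_max_left _ _) ?_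
      have := h𝒜_max (c' + P c) (-P c)
      rw [add_neg_cancel_right, hneg] at this
      exact this.trans (max_le (le_max_right _ _) ((AP c).trans (le_max_left _ _)))
  have φsurj : Function.Surjective φ := fun x => ⟨(x.1, x.2 - P x.1), by simp [hφ]⟩
  have conj : ∀ x, coneDiff d D t (φ x) = φ (-(d x.1), t • p (D (p x.1)) + d x.2) := by
    rintro ⟨c, c'⟩
    have e1 : coneDiff d D t (φ (c, c')) = (-(d c), t • D c + d (c' + P c)) := rfl
    rw [e1, hφ]
    refine Prod.ext rfl ?_
    have h1 := dec (D (p c))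
    have h2 : D c = D (p c) + D (d (u c)) + D (u (d c)) := by
      rw [← map_add, ← map_add, dec]
    have h3 : p (d c) = 0 := pd c
    rw [hdD, dp, map_zero, map_zero, add_zero] at h1
    simp only [hP, map_add, map_neg, map_smul, h3, hdD, h2, map_zero]
    have h4 : d (u (D (p c))) = D (p c) - p (D (p c)) := by
      rw [eq_sub_iff_add_eq, add_comm]; exact h1
    rw [h4]
    module
  let S : (Hgy d × Hgy d) →ₗ[Λ] (C × C) := s.prodMap s
  have hS : ∀ h, S h = (s h.1, s h.2) := fun h => rfl
  have AS : ∀ h, coneFilt (inducedFiltration d 𝒜) (inducedFiltration d 𝒜) h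
      = coneFilt 𝒜 𝒜 (S h) := by
    intro h
    simp only [coneFilt, AH, hS]
  have csmul : ∀ (l : Λ) (x : C × C), coneFilt 𝒜 𝒜 (l • x) = coneFilt 𝒜 𝒜 x - ν l := by
    intro l x
    simp only [coneFilt, Prod.smul_fst, Prod.smul_snd, h𝒜_smul]
    exact ereal_max_sub _ _ _
  have c0 : ∀ x, coneFilt 𝒜 𝒜 x = ⊥ ↔ x = 0 := by
    intro x
    simp only [coneFilt, max_eq_bot, h𝒜_zero, Prod.ext_iff, Prod.fst_zero, Prod.snd_zero]
  have csmul' : ∀ (l : Λ) (x : Hgy d × Hgy d),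
      coneFilt (inducedFiltration d 𝒜) (inducedFiltration d 𝒜) (l • x)
        = coneFilt (inducedFiltration d 𝒜) (inducedFiltration d 𝒜) x - ν l := by
    intro l x
    rw [AS, AS, map_smul, csmul]
  have O' := (orth_le_iff csmul').1 G'.orth
  have split1 : ∀ h y M, p y = 0 → (𝒜 (s h + y) ≤ M ↔ 𝒜 (s h) ≤ M ∧ 𝒜 y ≤ M) := by
    intro h y M hy
    constructor
    · intro h1
      have h2 : 𝒜 (s h) ≤ M := by
        have := Ap (s h + y)
        rw [map_add, hy, ps, add_zero] at this
        exact this.trans h1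
      refine ⟨h2, ?_⟩
      have := h𝒜_max (s h + y) (-s h)
      rw [add_neg_cancel_comm, hneg] at this
      exact this.trans (max_le h1 h2)
    · rintro ⟨h1, h2⟩
      exact (h𝒜_max _ _).trans (max_le h1 h2)
  have split2 : ∀ h y y' M, p y = 0 → p y' = 0 →
      (coneFilt 𝒜 𝒜 (S h + (y, y')) ≤ M ↔ coneFilt 𝒜 𝒜 (S h) ≤ M ∧ 𝒜 y ≤ M ∧ 𝒜 y' ≤ M) := by
    intro h y y' M hy hy'
    simp only [coneFilt, hS, Prod.fst_add, Prod.snd_add, max_le_iff, split1 _ _ M hy,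
      split1 _ _ M hy']
    tauto
  have splitY : ∀ (a c : κ → Λ) M,
      𝒜 (∑ j, a j • e (Sum.inr (Sum.inl j)) + ∑ j, c j • e (Sum.inr (Sum.inr j))) ≤ M ↔
      (∀ j, 𝒜 (a j • e (Sum.inr (Sum.inl j))) ≤ M) ∧
        (∀ j, 𝒜 (c j • e (Sum.inr (Sum.inr j))) ≤ M) := by
    intro a c M
    have := O (Sum.elim 0 (Sum.elim a c)) M
    simpa [Fintype.sum_sum_type, A0] using this
  let F : ι' ⊕ (κ' ⊕ κ ⊕ κ) ⊕ (κ' ⊕ κ ⊕ κ) → C × C :=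
    Sum.elim (fun i => S (e' (Sum.inl i)))
      (Sum.elim
        (Sum.elim (fun j => S (e' (Sum.inr (Sum.inl j))))
          (Sum.elim (fun j => (e (Sum.inr (Sum.inl j)), 0))
            (fun j => (0, e (Sum.inr (Sum.inl j))))))
        (Sum.elim (fun j => t • S (e' (Sum.inr (Sum.inr j))))
          (Sum.elim (fun j => (-e (Sum.inr (Sum.inr j)), 0))
            (fun j => (0, e (Sum.inr (Sum.inr j)))))))
  have orthF : ∀ (lam : _ → Λ) (M : EReal), coneFilt 𝒜 𝒜 (∑ i, lam i • F i) ≤ M ↔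
      ∀ i, coneFilt 𝒜 𝒜 (lam i • F i) ≤ M := by
    intro lam M
    let lam' : ι' ⊕ κ' ⊕ κ' → Λ := Sum.elim (fun i => lam (Sum.inl i))
      (Sum.elim (fun j => lam (Sum.inr (Sum.inl (Sum.inl j))))
        (fun j => lam (Sum.inr (Sum.inr (Sum.inl j))) * t))
    let y : C := ∑ j, lam (Sum.inr (Sum.inl (Sum.inr (Sum.inl j)))) • e (Sum.inr (Sum.inl j)) +
      ∑ j, (-lam (Sum.inr (Sum.inr (Sum.inr (Sum.inl j))))) • e (Sum.inr (Sum.inr j))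
    let y' : C := ∑ j, lam (Sum.inr (Sum.inl (Sum.inr (Sum.inr j)))) • e (Sum.inr (Sum.inl j)) +
      ∑ j, (lam (Sum.inr (Sum.inr (Sum.inr (Sum.inr j))))) • e (Sum.inr (Sum.inr j))
    have hsum : ∑ i, lam i • F i = S (∑ i, lam' i • e' i) + (y, y') := by
      have hyy : (y, y') = LinearMap.inl Λ C C y + LinearMap.inr Λ C C y' := by simp
      rw [hyy]
      simp only [Fintype.sum_sum_type, F, lam', y, y', map_add, map_sum, map_smul, Sum.elim_inl,
        Sum.elim_inr, mul_smul, LinearMap.inl_apply, LinearMap.inr_apply]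
      have : ∀ j, -lam (Sum.inr (Sum.inr (Sum.inr (Sum.inl j)))) •
          ((e (Sum.inr (Sum.inr j)), 0) : C × C)
          = lam (Sum.inr (Sum.inr (Sum.inr (Sum.inl j)))) • (-e (Sum.inr (Sum.inr j)), 0) := by
        intro j; simp
      simp only [this]
      abel
    have py : p y = 0 := by simp [y, pe]
    have py' : p y' = 0 := by simp [y', pe]
    rw [hsum, split2 _ _ _ _ py py', ← AS, O', splitY, splitY]
    simp only [Sum.forall, F, lam', Sum.elim_inl, Sum.elim_inr, AH, hS, map_smul, mul_smul, neg_smul,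
      hneg, coneFilt, Prod.smul_fst, Prod.smul_snd, smul_zero, A0, smul_neg, max_le_iff, bot_le,
      and_true, true_and]
    tauto
  have Fne : ∀ i, F i ≠ 0 := by
    have hS0 : ∀ h, S h = 0 → h = 0 := by
      intro h h0
      rw [hS, Prod.ext_iff] at h0
      exact Prod.ext (s_inj _ h0.1) (s_inj _ h0.2)
    have hne' := G'.li.ne_zero
    have hne := G.li.ne_zero
    rintro (i | (j | j | j) | (j | j | j)) h0
    · exact hne' _ (hS0 _ h0)
    · exact hne' _ (hS0 _ h0)
    · exact hne _ (congrArg Prod.fst h0)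
    · exact hne _ (congrArg Prod.snd h0)
    · exact hne' _ (hS0 _ ((smul_eq_zero.1 h0).resolve_left ht0))
    · exact hne _ (neg_eq_zero.1 (congrArg Prod.fst h0))
    · exact hne _ (congrArg Prod.snd h0)
  have liF : LinearIndependent Λ F := by
    rw [Fintype.linearIndependent_iff]
    intro lam h0 i
    have h1 := (orthF lam ⊥).1 (by rw [h0, (c0 0).2 rfl]) i
    rw [le_bot_iff, c0] at h1
    exact (smul_eq_zero.1 h1).resolve_right (Fne i)
  have spanF : Submodule.span Λ (Set.range F) = ⊤ := by
    rw [eq_top_iff]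
    have hF : ∀ i, F i ∈ Submodule.span Λ (Set.range F) :=
      fun i => Submodule.subset_span ⟨i, rfl⟩
    have hSm : ∀ h, S h ∈ Submodule.span Λ (Set.range F) := by
      intro h
      have hh : h ∈ Submodule.span Λ (Set.range e') := by rw [G'.span]; trivial
      have : Submodule.span Λ (Set.range e') ≤ (Submodule.span Λ (Set.range F)).comap S := by
        rw [Submodule.span_le]
        rintro _ ⟨i | j | j, rfl⟩
        · exact hF (Sum.inl i)
        · exact hF (Sum.inr (Sum.inl (Sum.inl j)))
        · have := Submodule.smul_mem _ t⁻¹ (hF (Sum.inr (Sum.inr (Sum.inl j))))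
          simpa [F, smul_smul, inv_mul_cancel₀ ht0] using this
      exact this hh
    have hsx : ∀ i, ∃ h, s h = e (Sum.inl i) := fun i =>
      ⟨Submodule.Quotient.mk ⟨e (Sum.inl i), G.dker i⟩, by rw [smk]; simp [pe]⟩
    have h1 : Submodule.span Λ (Set.range e) ≤
        (Submodule.span Λ (Set.range F)).comap (LinearMap.inl Λ C C) := by
      rw [Submodule.span_le]
      rintro _ ⟨i | j | j, rfl⟩
      · obtain ⟨h, hh⟩ := hsx i
        have := hSm (h, 0)
        simpa [hS, hh] using this
      · exact hF (Sum.inr (Sum.inl (Sum.inr (Sum.inl j))))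
      · have := Submodule.neg_mem _ (hF (Sum.inr (Sum.inr (Sum.inr (Sum.inl j)))))
        simpa [F] using this
    have h2 : Submodule.span Λ (Set.range e) ≤
        (Submodule.span Λ (Set.range F)).comap (LinearMap.inr Λ C C) := by
      rw [Submodule.span_le]
      rintro _ ⟨i | j | j, rfl⟩
      · obtain ⟨h, hh⟩ := hsx i
        have := hSm (0, h)
        simpa [hS, hh] using this
      · exact hF (Sum.inr (Sum.inl (Sum.inr (Sum.inr j))))
      · exact hF (Sum.inr (Sum.inr (Sum.inr (Sum.inr j))))
    rw [G.span] at h1 h2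
    rintro ⟨x, x'⟩ -
    have m1 := h1 (show x ∈ (⊤ : Submodule Λ C) from trivial)
    have m2 := h2 (show x' ∈ (⊤ : Submodule Λ C) from trivial)
    have := Submodule.add_mem _ (Submodule.mem_comap.1 m1) (Submodule.mem_comap.1 m2)
    simpa using this
  have dS : ∀ h : Hgy d × Hgy d, coneDiff d D t (φ (S h))
      = φ (t • S (LinearMap.prod 0
            ((inducedMap d D hchain) ∘ₗ LinearMap.fst Λ (Hgy d) (Hgy d)) h)) := by
    intro h
    rw [conj]
    congr 1
    simp [hS, ds, ps, sD]
  have φinj : ∀ x, φ x = 0 → x = 0 := by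
    intro x hx
    rw [← c0, ← Aφ, hx, (c0 0).2 rfl]
  refine ⟨fun i => φ (F i), ?_, ?_, ?_, ?_, ?_, ?_⟩
  · exact liF.map' φ (LinearMap.ker_eq_bot'.2 φinj)
  · have : Set.range (fun i => φ (F i)) = φ '' Set.range F := by
      rw [← Set.range_comp]; rfl
    rw [this, Submodule.span_image, spanF, Submodule.map_top, LinearMap.range_eq_top.2 φsurj]
  · rw [orth_le_iff csmul]
    intro lam M
    simp only [← map_smul, ← map_sum, Aφ]
    exact orthF lam M
  · intro i
    have := dS (e' (Sum.inl i))
    rw [G'.dker] at this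
    simpa [F] using this
  · rintro (j | j | j)
    · have := dS (e' (Sum.inr (Sum.inl j)))
      rw [G'.dz] at this
      exact this
    · simp only [F, Sum.elim_inl, Sum.elim_inr]
      rw [conj]
      simp [pe, G.dz]
    · simp only [F, Sum.elim_inl, Sum.elim_inr]
      rw [conj]
      simp [G.dz]
  · rintro (j | j | j)
    · simp only [F, Sum.elim_inl, Sum.elim_inr, Aφ, csmul, ← AS, ht]
      obtain ⟨r, hr, hr'⟩ := ereal_sub_eq_real (G'.bar j)
      rw [hr, hr']
      norm_cast
      ring
    · simp only [F, Sum.elim_inl, Sum.elim_inr, Aφ]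
      simpa [coneFilt, A0, hneg] using G.bar j
    · simp only [F, Sum.elim_inl, Sum.elim_inr, Aφ]
      simpa [coneFilt, A0, hneg] using G.bar j

/-- For `σ` sufficiently large, the bar-length spectrum of the shifted cone
`C̄_σ = Cone(T^σ · D)` is the doubled spectrum of `(C, d)` together with `σ` plus the
spectrum of the cone of the induced map `[D]` on homology with its induced filtration. -/
theorem cone_barLength_spectrum_splits
    {Λ C : Type*} [Field Λ] [AddCommGroup C] [Module Λ C] [FiniteDimensional Λ C]
    (ν : Λ → EReal)
    (hν_ne_bot : ∀ x : Λ, ν x ≠ ⊥)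
    (hν_zero : ∀ x : Λ, ν x = ⊤ ↔ x = 0)
    (hν_mul : ∀ x y : Λ, ν (x * y) = ν x + ν y)
    (hν_add : ∀ x y : Λ, min (ν x) (ν y) ≤ ν (x + y))
    (𝒜 : C → EReal)
    (h𝒜_ne_top : ∀ x : C, 𝒜 x ≠ ⊤)
    (h𝒜_zero : ∀ x : C, 𝒜 x = ⊥ ↔ x = 0)
    (h𝒜_smul : ∀ (l : Λ) (x : C), 𝒜 (l • x) = 𝒜 x - ν l)
    (h𝒜_max : ∀ x y : C, 𝒜 (x + y) ≤ max (𝒜 x) (𝒜 y))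
    (d D : C →ₗ[Λ] C)
    (hd2 : d ∘ₗ d = 0)
    (hd_filt : ∀ x : C, 𝒜 (d x) ≤ 𝒜 x)
    (hD_filt : ∀ x : C, 𝒜 (D x) ≤ 𝒜 x)
    (hchain : d ∘ₗ D = D ∘ₗ d)
    (Tp : ℝ → Λ) (hTp : ∀ r : ℝ, ν (Tp r) = (r : EReal)) :
    ∃ σ₀ : ℝ, ∀ σ : ℝ, σ₀ ≤ σ →
      ∀ Sc Sd Sh : Multiset ℝ,
        IsBarSpectrum ν (coneFilt 𝒜 𝒜) (coneDiff d D (Tp σ)) Sc →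
        IsBarSpectrum ν 𝒜 d Sd →
        IsBarSpectrum ν (coneFilt (inducedFiltration d 𝒜) (inducedFiltration d 𝒜))
          (LinearMap.prod 0
            ((inducedMap d D hchain) ∘ₗ LinearMap.fst Λ (Hgy d) (Hgy d))) Sh →
        Sc = Sd + Sd + Sh.map (fun b => σ + b) := by
  classical
  have hd2' : ∀ x, d (d x) = 0 := fun x => LinearMap.congr_fun hd2 x
  by_cases hex : ∃ S0, IsBarSpectrum ν 𝒜 d S0
  swap
  · exact ⟨0, fun σ _ Sc Sd Sh _ h2 _ => absurd ⟨Sd, h2⟩ hex⟩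
  obtain ⟨S0, B, K, e, β, g1, g2, g3, g4, g5, g6, hS0⟩ := hex
  have G : GenBar ν 𝒜 d e β := ⟨g1, g2, g3, g4, g5, g6⟩
  refine ⟨∑ j, |β j|, ?_⟩
  rintro σ hσ Sc Sd Sh ⟨Bc, Kc, ec, βc, c1, c2, c3, c4, c5, c6, hSc⟩
    ⟨B', K', e', β', a1, a2, a3, a4, a5, a6, hSd⟩
    ⟨Bh, Kh, eh, βh, h1, h2, h3, h4, h5, h6, hSh⟩
  have hSd0 : Sd = Finset.univ.val.map β := by
    rw [hSd]
    exact GenBar.unique hν_ne_bot hν_zero hd2' ⟨a1, a2, a3, a4, a5, a6⟩ G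
  obtain ⟨F, GF⟩ := cone_genbar ν hν_ne_bot hν_zero hν_mul 𝒜 h𝒜_zero h𝒜_smul h𝒜_max
    d D hd2' hD_filt hchain (Tp σ) σ _ (hTp σ) hσ G
    (fun j => (le_abs_self _).trans
      (Finset.single_le_sum (f := fun j => |β j|) (fun i _ => abs_nonneg _) (Finset.mem_univ j)))
    ⟨h1, h2, h3, h4, h5, h6⟩
  have hdD : ∀ x, d (D x) = D (d x) := fun x => LinearMap.congr_fun hchain x
  have hcd2 : ∀ x, coneDiff d D (Tp σ) (coneDiff d D (Tp σ) x) = 0 := by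
    rintro ⟨c, c'⟩
    simp [coneDiff, hd2', hdD]
  have := GenBar.unique hν_ne_bot hν_zero hcd2 ⟨c1, c2, c3, c4, c5, c6⟩ GF
  rw [hSc, this, hSd0, hSh]
  have hsum : ∀ {α γ : Type} [Fintype α] [Fintype γ] (f : α → ℝ) (g : γ → ℝ),
      (Finset.univ : Finset (α ⊕ γ)).val.map (Sum.elim f g)
        = Finset.univ.val.map f + Finset.univ.val.map g := by
    intro α γ _ _ f g
    rw [← Finset.univ_disjSum_univ, Finset.val_disjSum, Multiset.disjSum, Multiset.map_add,
      Multiset.map_map, Multiset.map_map]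
    rfl
  rw [hsum, hsum, Multiset.map_map, add_comm]
  rfl
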